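/- arXiv:math/9406221 — 2 statements merged into one kernel-verified Lean document; each statement's English description precedes it below -/
import Mathlib

section
/- Let α > −1/2, γ > −1 and m ≥ 1. Let Ŝ_n^{(α+1,γ)} be the monic generalized ultraspherical polynomials with parameters (α+1, γ), and define W(z) := z·Ŝ_{2m}^{(α+1,γ)}(z) − (2m/(2α+γ+4m))·Ŝ_{2m−1}^{(α+1,γ)}(z). Then: (a) every real root z₀ ≠ 0 of W satisfies (2m+γ+1)·Ŝ_{2m}^{(α+1,γ)}(z₀) = W'(z₀); (b) W(0) = 0 and (2m+γ+1)·Ŝ_{2m}^{(α+1,γ)}(0) = (γ+1)·W'(0). In other words, the reversed measure ξ_{α,γ,2m}^{R*}, whose Stieltjes transform is Ŝ_{2m}^{(α+1,γ)}/W, has equal masses 1/(2m+γ+1) at all support points different from 0 and mass (γ+1)/(2m+γ+1) at the point 0. -/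
open Polynomial

/-- The recurrence coefficients `γ_n^{(α,γ)}` of the monic generalized ultraspherical
polynomials: `γ_{2m}^{(α,γ)} = (2m-1+γ)(2m-2+2α+γ)/((4m-4+2α+γ)(4m-2+2α+γ))` and
`γ_{2m+1}^{(α,γ)} = 2m(2m+2α-1)/((4m-2+2α+γ)(4m+2α+γ))`. -/
noncomputable def gammaCoef (α γ : ℝ) (n : ℕ) : ℝ :=
  if Even n then
    ((n : ℝ) - 1 + γ) * ((n : ℝ) - 2 + 2 * α + γ) /
      ((2 * (n : ℝ) - 4 + 2 * α + γ) * (2 * (n : ℝ) - 2 + 2 * α + γ))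
  else
    ((n : ℝ) - 1) * ((n : ℝ) - 2 + 2 * α) /
      ((2 * (n : ℝ) - 4 + 2 * α + γ) * (2 * (n : ℝ) - 2 + 2 * α + γ))

/-- The monic generalized ultraspherical polynomials `Ŝ_n^{(α,γ)}`, orthogonal with respect
to `|x|^γ (1-x²)^{α-1/2}` on `[-1,1]`: `Ŝ 0 = 1`, `Ŝ 1 = X` and
`Ŝ_{n+1}(x) = x · Ŝ_n(x) - γ_{n+1}^{(α,γ)} · Ŝ_{n-1}(x)`. -/
noncomputable def genUltra (α γ : ℝ) : ℕ → Polynomial ℝ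
  | 0 => 1
  | 1 => Polynomial.X
  | n + 2 =>
      Polynomial.X * genUltra α γ (n + 1) -
        Polynomial.C (gammaCoef α γ (n + 2)) * genUltra α γ n

theorem genUltra_even_succ (α γ : ℝ) (m : ℕ) :
    genUltra (α + 1) γ (2 * m + 2) = X * genUltra (α + 1) γ (2 * m + 1) -
      C ((2 * m + 1 + γ) * (2 * m + 2 + 2 * α + γ) /
        ((4 * m + 2 + 2 * α + γ) * (4 * m + 4 + 2 * α + γ))) * genUltra (α + 1) γ (2 * m) := by
  have h : Even (2 * m + 2) := ⟨m + 1, by ring⟩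
  rw [genUltra, gammaCoef, if_pos h]
  congr 3
  push_cast
  congr 1 <;> ring

theorem genUltra_odd_succ (α γ : ℝ) (m : ℕ) :
    genUltra (α + 1) γ (2 * m + 3) = X * genUltra (α + 1) γ (2 * m + 2) -
      C ((2 * m + 2) * (2 * m + 3 + 2 * α) /
        ((4 * m + 4 + 2 * α + γ) * (4 * m + 6 + 2 * α + γ))) *
        genUltra (α + 1) γ (2 * m + 1) := by
  have h : ¬ Even (2 * m + 1 + 2) := by
    rw [Nat.not_even_iff_odd]
    exact ⟨m + 1, by ring⟩
  rw [genUltra, gammaCoef, if_neg h]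
  congr 3
  push_cast
  congr 1 <;> ring

/-- The monic generalized ultraspherical polynomial of degree `2m+1` with parameters `(α,γ)`,
written in terms of those with parameters `(α+1,γ)`. -/
noncomputable def oddLowering (α γ : ℝ) (m : ℕ) : ℝ[X] :=
  X * genUltra (α + 1) γ (2 * m) -
    C (2 * (m : ℝ) / (2 * α + γ + 4 * m)) * genUltra (α + 1) γ (2 * m - 1)

/-- The monic generalized ultraspherical polynomial of degree `2m+2` with parameters `(α,γ)`,
written in terms of those with parameters `(α+1,γ)`. -/
noncomputable def evenLowering (α γ : ℝ) (m : ℕ) : ℝ[X] :=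
  X * genUltra (α + 1) γ (2 * m + 1) -
    C ((2 * m + 1 + γ) / (4 * m + 2 + 2 * α + γ)) * genUltra (α + 1) γ (2 * m)

theorem oddLowering_succ_def (α γ : ℝ) (m : ℕ) :
    oddLowering α γ (m + 1) = X * genUltra (α + 1) γ (2 * m + 2) -
      C ((2 * m + 2) / (4 * m + 4 + 2 * α + γ)) * genUltra (α + 1) γ (2 * m + 1) := by
  have h : 2 * (m + 1) - 1 = 2 * m + 1 := by omega
  rw [oddLowering, h, Nat.mul_add_one]
  congr 3
  push_cast
  congr 1 <;> ring

theorem oddLowering_succ {α γ : ℝ} (h : -2 < 2 * α + γ) (m : ℕ) :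
    oddLowering α γ (m + 1) = X * evenLowering α γ m -
      C ((2 * m + 2) * (2 * m + 1 + 2 * α) /
        ((4 * m + 2 + 2 * α + γ) * (4 * m + 4 + 2 * α + γ))) * oddLowering α γ m := by
  have hm : (0 : ℝ) ≤ m := m.cast_nonneg
  have h2 : 4 * (m : ℝ) + 2 + 2 * α + γ ≠ 0 := by linarith
  have h4 : 4 * (m : ℝ) + 4 + 2 * α + γ ≠ 0 := by linarith
  rw [oddLowering_succ_def, evenLowering, genUltra_even_succ]
  cases m with
  | zero =>
    refine Polynomial.funext fun x => ?_
    obtain ⟨t, ht⟩ : ∃ t, t = 2 + 2 * α + γ := ⟨_, rfl⟩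
    have e4 : 4 + 2 * α + γ = t + 2 := by rw [ht]; ring
    simp only [CharP.cast_eq_zero, mul_zero, zero_add, ← ht, e4] at h2 h4
    simp only [oddLowering, genUltra, CharP.cast_eq_zero, mul_zero, zero_add, zero_div, map_zero,
      zero_mul, sub_zero, mul_one, ← ht, e4, eval_sub, eval_mul, eval_X, eval_C]
    field_simp
    rw [ht]
    ring
  | succ m =>
    rw [oddLowering_succ_def, Nat.mul_add_one, genUltra_odd_succ]
    push_cast at h2 h4 ⊢
    have h0 : 4 * (m : ℝ) + 4 + 2 * α + γ ≠ 0 := by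
      have : (0 : ℝ) ≤ m := m.cast_nonneg
      linarith
    obtain ⟨t, ht⟩ : ∃ t, t = 4 * (m : ℝ) + 4 + 2 * α + γ := ⟨_, rfl⟩
    have e2 : 4 * ((m : ℝ) + 1) + 2 + 2 * α + γ = t + 2 := by rw [ht]; ring
    have e2' : 4 * (m : ℝ) + 6 + 2 * α + γ = t + 2 := by rw [ht]; ring
    have e4 : 4 * ((m : ℝ) + 1) + 4 + 2 * α + γ = t + 4 := by rw [ht]; ring
    rw [← ht] at h0
    rw [e2] at h2
    rw [e4] at h4
    rw [e2, e2', e4, ← ht]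
    refine Polynomial.funext fun x => ?_
    simp only [eval_sub, eval_mul, eval_X, eval_C]
    field_simp
    rw [ht]
    ring

theorem evenLowering_succ {α γ : ℝ} (h : -2 < 2 * α + γ) (m : ℕ) :
    evenLowering α γ (m + 1) = X * oddLowering α γ (m + 1) -
      C ((2 * m + 3 + γ) * (2 * m + 2 + 2 * α + γ) /
        ((4 * m + 4 + 2 * α + γ) * (4 * m + 6 + 2 * α + γ))) * evenLowering α γ m := by
  have hm : (0 : ℝ) ≤ m := m.cast_nonneg
  have h2 : 4 * (m : ℝ) + 2 + 2 * α + γ ≠ 0 := by linarith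
  have h4 : 4 * (m : ℝ) + 4 + 2 * α + γ ≠ 0 := by linarith
  have h6 : 4 * (m : ℝ) + 6 + 2 * α + γ ≠ 0 := by linarith
  rw [oddLowering_succ_def, evenLowering, evenLowering, Nat.mul_add_one, genUltra_odd_succ,
    genUltra_even_succ]
  push_cast
  rw [show 4 * ((m : ℝ) + 1) + 2 + 2 * α + γ = 4 * m + 6 + 2 * α + γ by ring]
  obtain ⟨t, ht⟩ : ∃ t, t = 4 * (m : ℝ) + 2 + 2 * α + γ := ⟨_, rfl⟩
  have e4 : 4 * (m : ℝ) + 4 + 2 * α + γ = t + 2 := by rw [ht]; ring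
  have e6 : 4 * (m : ℝ) + 6 + 2 * α + γ = t + 4 := by rw [ht]; ring
  rw [← ht] at h2
  rw [e4] at h4
  rw [e6] at h6
  refine Polynomial.funext fun x => ?_
  simp only [eval_sub, eval_mul, eval_X, eval_C, ← ht, e4, e6]
  field_simp
  rw [ht]
  ring

/-- The Dunkl operator `f ↦ f' + γ (f(x) - f(-x)) / (2x)` lowers the degree by one and raises `α`
by one. -/
theorem derivative_lowering {α γ : ℝ} (h : -2 < 2 * α + γ) (m : ℕ) :
    X * derivative (oddLowering α γ m) + C γ * oddLowering α γ m =
        C (2 * m + 1 + γ) * X * genUltra (α + 1) γ (2 * m) ∧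
      derivative (evenLowering α γ m) = C (2 * m + 2 : ℝ) * genUltra (α + 1) γ (2 * m + 1) := by
  induction m with
  | zero =>
    constructor <;> refine Polynomial.funext fun x => ?_ <;>
      simp [oddLowering, evenLowering, genUltra] <;> ring
  | succ m ih =>
    have hm : (0 : ℝ) ≤ m := m.cast_nonneg
    have h2 : 4 * (m : ℝ) + 2 + 2 * α + γ ≠ 0 := by linarith
    have h4 : 4 * (m : ℝ) + 4 + 2 * α + γ ≠ 0 := by linarith
    have h6 : 4 * (m : ℝ) + 6 + 2 * α + γ ≠ 0 := by linarith
    obtain ⟨t, ht⟩ : ∃ t, t = 4 * (m : ℝ) + 2 + 2 * α + γ := ⟨_, rfl⟩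
    have e4 : 4 * (m : ℝ) + 4 + 2 * α + γ = t + 2 := by rw [ht]; ring
    have e6 : 4 * (m : ℝ) + 6 + 2 * α + γ = t + 4 := by rw [ht]; ring
    rw [← ht] at h2
    rw [e4] at h4
    rw [e6] at h6
    obtain ⟨hF, hE⟩ := ih
    have hodd : X * derivative (oddLowering α γ (m + 1)) + C γ * oddLowering α γ (m + 1) =
        C (2 * ↑(m + 1) + 1 + γ) * X * genUltra (α + 1) γ (2 * (m + 1)) := by
      refine Polynomial.funext fun x => ?_
      have hF' := congrArg (eval x) hF
      rw [oddLowering_succ h, Nat.mul_add_one, genUltra_even_succ]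
      simp only [derivative_sub, derivative_mul, derivative_X, derivative_C, hE]
      rw [evenLowering]
      simp only [eval_add, eval_sub, eval_mul, eval_X, eval_C, eval_one, eval_zero] at hF' ⊢
      push_cast
      simp only [← ht, e4]
      linear_combination (norm := skip)
        (-((2 * m + 2) * (2 * m + 1 + 2 * α) / (t * (t + 2)))) * hF'
      field_simp
      rw [ht]
      ring
    refine ⟨hodd, Polynomial.funext fun x => ?_⟩
    have hF' := congrArg (eval x) hodd
    have hO := congrArg (eval x) (oddLowering_succ_def α γ m)
    rw [evenLowering_succ h, Nat.mul_add_one, genUltra_odd_succ]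
    rw [Nat.mul_add_one] at hF'
    simp only [derivative_sub, derivative_mul, derivative_X, derivative_C, hE]
    simp only [eval_add, eval_sub, eval_mul, eval_X, eval_C, eval_one, eval_zero] at hF' hO ⊢
    push_cast at hF' ⊢
    simp only [e4, e6] at hF' hO ⊢
    linear_combination (norm := skip) hF' + (1 - γ) * hO
    field_simp
    rw [ht]
    ring

theorem X_dvd_oddLowering {α γ : ℝ} (h : -2 < 2 * α + γ) (m : ℕ) : X ∣ oddLowering α γ m := by
  induction m with
  | zero => simp [oddLowering, genUltra]
  | succ m ih =>
    rw [oddLowering_succ h]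
    exact dvd_sub (dvd_mul_right _ _) (ih.mul_left _)

/-- **Masses of the reversed measure for the generalized ultraspherical polynomials
(forward direction of Theorem 2.3).**  With
`W(z) := z · Ŝ_{2m}^{(α+1,γ)}(z) - (2m/(2α+γ+4m)) · Ŝ_{2m-1}^{(α+1,γ)}(z)`:
(a) every real root `z₀ ≠ 0` of `W` satisfies
`(2m+γ+1) · Ŝ_{2m}^{(α+1,γ)}(z₀) = W'(z₀)`; and (b) `W(0) = 0` and
`(2m+γ+1) · Ŝ_{2m}^{(α+1,γ)}(0) = (γ+1) · W'(0)`.  That is, the reversed measure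
`ξ_{α,γ,2m}^{R*}` with Stieltjes transform `Ŝ_{2m}^{(α+1,γ)}/W` has equal masses
`1/(2m+γ+1)` at all support points different from `0` and mass `(γ+1)/(2m+γ+1)` at `0`. -/
theorem genUltra_reversed_masses (α γ : ℝ) (hα : -(1 / 2 : ℝ) < α) (hγ : -1 < γ)
    (m : ℕ) (hm : 1 ≤ m)
    (W : Polynomial ℝ)
    (hW : W = Polynomial.X * genUltra (α + 1) γ (2 * m) -
      Polynomial.C (2 * (m : ℝ) / (2 * α + γ + 4 * m)) * genUltra (α + 1) γ (2 * m - 1)) :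
    (∀ z₀ : ℝ, z₀ ≠ 0 → W.eval z₀ = 0 →
      (2 * (m : ℝ) + γ + 1) * (genUltra (α + 1) γ (2 * m)).eval z₀ =
        (Polynomial.derivative W).eval z₀) ∧
    W.eval 0 = 0 ∧
    (2 * (m : ℝ) + γ + 1) * (genUltra (α + 1) γ (2 * m)).eval 0 =
      (γ + 1) * (Polynomial.derivative W).eval 0 := by
  have h : -2 < 2 * α + γ := by linarith
  change W = oddLowering α γ m at hW
  obtain ⟨V, hV⟩ : X ∣ W := hW ▸ X_dvd_oddLowering h m
  have hD : derivative W + C γ * V = C (2 * m + 1 + γ) * genUltra (α + 1) γ (2 * m) := by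
    have := (derivative_lowering h m).1
    rw [← hW] at this
    refine mul_left_cancel₀ (X_ne_zero (R := ℝ)) ?_
    linear_combination this - C γ * hV
  have hDx (x : ℝ) : (derivative W).eval x + γ * V.eval x =
      (2 * m + 1 + γ) * (genUltra (α + 1) γ (2 * m)).eval x := by
    simpa only [eval_add, eval_mul, eval_C] using congrArg (eval x) hD
  refine ⟨fun z hz hWz => ?_, by simp [hV], ?_⟩
  · have hVz : V.eval z = 0 := by simpa [hV, hz] using hWz
    linear_combination -hDx z + γ * hVz
  · have h0 : (derivative W).eval 0 = V.eval 0 := by simp [hV]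
    linear_combination -hDx 0 - γ * h0
end

section
/- Let (γ_l)_{l≥1} be a sequence of reals with γ_l > −1 and lim_{l→∞} γ_l/l = c ≥ 0. For each l let K_l^{(γ_l)} be the monic generalized Hermite polynomial of degree l with parameter γ_l, and for y ∈ ℝ let N_l(y) denote the number of real zeros of K_l^{(γ_l)}, counted with multiplicity, that are ≤ y. Then for every y ∈ ℝ, lim_{l→∞} (1/l)·N_l(√l·y) = (1/π)·∫ over x ∈ (−∞, y] with (x² − c/2 − 1)² < c + 1 of √((c+1) − (x² − c/2 − 1)²) / |x| dx. -/
open Polynomial MeasureTheory Filter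

/-- The monic generalized Hermite polynomials `K_n^{(γ)}`, defined by `K 0 = 1`, `K 1 = X`
and `K_{n+1}(x) = x · K_n(x) - â_n · K_{n-1}(x)` where `â_n = n/2` for even `n` and
`â_n = (n+γ)/2` for odd `n`; they are orthogonal with respect to `|x|^γ exp(-x²)` on `ℝ`. -/
noncomputable def genHermite (γ : ℝ) : ℕ → Polynomial ℝ
  | 0 => 1
  | 1 => Polynomial.X
  | n + 2 =>
      Polynomial.X * genHermite γ (n + 1) -
        Polynomial.C (if Even (n + 1) then ((n : ℝ) + 1) / 2 else ((n : ℝ) + 1 + γ) / 2) *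
          genHermite γ n

/-- The recurrence coefficient satisfies `2 â_n = n + genHermiteShift γ n`. -/
noncomputable def genHermiteShift (γ : ℝ) (n : ℕ) : ℝ := if Even n then 0 else γ

lemma genHermiteShift_add_two (γ : ℝ) (n : ℕ) :
    genHermiteShift γ (n + 2) = genHermiteShift γ n := by
  simp [genHermiteShift, Nat.even_add]

lemma genHermiteShift_succ (γ : ℝ) (n : ℕ) :
    genHermiteShift γ (n + 1) = γ - genHermiteShift γ n := by
  by_cases h : Even n <;> simp [genHermiteShift, Nat.even_add_one, h]

lemma genHermiteShift_mul_self (γ : ℝ) (n : ℕ) :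
    genHermiteShift γ n * genHermiteShift γ n = γ * genHermiteShift γ n := by
  by_cases h : Even n <;> simp [genHermiteShift, h]

lemma genHermite_add_two (γ : ℝ) (n : ℕ) :
    genHermite γ (n + 2) = X * genHermite γ (n + 1) -
      C (((n : ℝ) + 1 + genHermiteShift γ (n + 1)) / 2) * genHermite γ n := by
  rw [genHermite, genHermiteShift]
  split_ifs <;> simp

lemma genHermite_monic_natDegree (γ : ℝ) (n : ℕ) :
    (genHermite γ n).Monic ∧ (genHermite γ n).natDegree = n := by
  induction n using Nat.twoStepInduction with
  | zero => simp [genHermite]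
  | one => simp [genHermite, monic_X]
  | more n h0 h1 =>
    have hdeg : (X * genHermite γ (n + 1)).natDegree = n + 2 := by
      rw [(monic_X).natDegree_mul h1.1, h1.2, natDegree_X]; ring
    have hm : (X * genHermite γ (n + 1)).Monic := monic_X.mul h1.1
    have hlt : (C (((n : ℝ) + 1 + genHermiteShift γ (n + 1)) / 2) *
        genHermite γ n).natDegree < (X * genHermite γ (n + 1)).natDegree := by
      refine (natDegree_C_mul_le _ _).trans_lt ?_
      omega
    rw [genHermite_add_two]
    refine ⟨hm.sub_of_left (degree_lt_degree hlt), ?_⟩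
    rw [natDegree_sub_eq_left_of_natDegree_lt hlt, hdeg]

lemma genHermite_ne_zero (γ : ℝ) (n : ℕ) : genHermite γ n ≠ 0 :=
  (genHermite_monic_natDegree γ n).1.ne_zero

lemma genHermite_eval_neg (γ : ℝ) (n : ℕ) (x : ℝ) :
    (genHermite γ n).eval (-x) = (-1) ^ n * (genHermite γ n).eval x := by
  induction n using Nat.twoStepInduction with
  | zero => simp [genHermite]
  | one => simp [genHermite]
  | more n h0 h1 =>
    simp only [genHermite_add_two, eval_sub, eval_mul, eval_X, eval_C, h0, h1]
    ring

/-- The structure relation expressing that the Dunkl derivative lowers the degree. -/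
lemma mul_derivative_genHermite_eval (γ : ℝ) (n : ℕ) (x : ℝ) :
    x * (derivative (genHermite γ (n + 1))).eval x =
      -genHermiteShift γ (n + 1) * (genHermite γ (n + 1)).eval x +
        ((n : ℝ) + 1 + genHermiteShift γ (n + 1)) * x * (genHermite γ n).eval x := by
  induction n using Nat.twoStepInduction with
  | zero => simp [genHermite]; ring
  | one =>
    simp [genHermite, genHermiteShift, show ¬ Even 1 by decide, show Even (1 + 1) by decide]
    ring
  | more n h0 h1 =>
    have r1 : (genHermite γ (n + 2)).eval x = x * (genHermite γ (n + 1)).eval x -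
        ((n : ℝ) + 1 + genHermiteShift γ (n + 1)) / 2 * (genHermite γ n).eval x := by
      simp [genHermite_add_two]
    have r2 := genHermite_add_two γ (n + 1)
    rw [show n + 1 + 1 = n + 2 from rfl] at h1 r2
    rw [show n + 2 + 1 = n + 1 + 2 from rfl, r2, genHermiteShift_add_two γ (n + 1)]
    simp only [derivative_sub, derivative_mul, derivative_X, derivative_C, eval_sub, eval_add,
      eval_mul, eval_X, eval_C, eval_one, eval_zero]
    push_cast at h1 ⊢
    linear_combination x * h1 - ((n : ℝ) + 2 + genHermiteShift γ (n + 2)) / 2 * h0 -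
      ((n : ℝ) + 2 + genHermiteShift γ (n + 2)) * x * r1

/-- The second order differential equation of the generalized Hermite polynomials. -/
lemma genHermite_ode (γ : ℝ) (n : ℕ) (x : ℝ) :
    x ^ 2 * (derivative (derivative (genHermite γ n))).eval x +
      (γ * x - 2 * x ^ 3) * (derivative (genHermite γ n)).eval x +
      (2 * n * x ^ 2 - genHermiteShift γ n) * (genHermite γ n).eval x = 0 := by
  match n with
  | 0 => simp [genHermite, genHermiteShift]
  | 1 => simp [genHermite, genHermiteShift]; ring
  | n + 2 =>
    have e1 := mul_derivative_genHermite_eval γ (n + 1) x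
    have e0 := mul_derivative_genHermite_eval γ n x
    have hp : X * derivative (genHermite γ (n + 2)) =
        -C (genHermiteShift γ (n + 2)) * genHermite γ (n + 2) +
          C ((n : ℝ) + 2 + genHermiteShift γ (n + 2)) * X * genHermite γ (n + 1) := by
      refine Polynomial.funext fun z => ?_
      have := mul_derivative_genHermite_eval γ (n + 1) z
      push_cast at this
      simp only [eval_add, eval_mul, eval_X, eval_C, eval_neg]
      linear_combination this
    have d1 := congrArg (fun p => (derivative p).eval x) hp
    simp only [derivative_add, derivative_mul, derivative_X, derivative_C, derivative_neg, eval_neg,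
      eval_add, eval_mul, eval_X, eval_C, eval_one, eval_zero] at d1
    have r1 : (genHermite γ (n + 2)).eval x = x * (genHermite γ (n + 1)).eval x -
        ((n : ℝ) + 1 + genHermiteShift γ (n + 1)) / 2 * (genHermite γ n).eval x := by
      simp [genHermite_add_two]
    have hs := genHermiteShift_succ γ (n + 1)
    have hss := genHermiteShift_mul_self γ (n + 2)
    rw [show n + 1 + 1 = n + 2 from rfl] at e1 hs
    push_cast at e1 ⊢
    generalize genHermiteShift γ (n + 2) = s at *
    generalize genHermiteShift γ (n + 1) = t at *
    obtain rfl : t = γ - s := by linarith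
    generalize (derivative (derivative (genHermite γ (n + 2)))).eval x = K2 at *
    generalize (derivative (genHermite γ (n + 2))).eval x = K1 at *
    generalize (derivative (genHermite γ (n + 1))).eval x = L1 at *
    generalize (genHermite γ (n + 2)).eval x = K at *
    generalize (genHermite γ (n + 1)).eval x = L at *
    generalize (genHermite γ n).eval x = M at *
    linear_combination x * d1 + ((n : ℝ) + 2 + s) * x * e0 +
      2 * ((n : ℝ) + 2 + s) * x ^ 2 * r1 +
      (γ - s - 1 - 2 * x ^ 2) * e1 + K * hss

/-- **Sturm comparison** with `v'' + k² v = 0`: a solution of `u'' + Q u = 0` with `Q > k²` has a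
zero inside every interval of length `π / k`. -/
lemma exists_zero_of_lt_sturm {u u' Q : ℝ → ℝ} {k a : ℝ} (hk : 0 < k)
    (hu : ∀ x ∈ Set.Icc a (a + Real.pi / k), HasDerivAt u (u' x) x)
    (hu' : ∀ x ∈ Set.Icc a (a + Real.pi / k), HasDerivAt u' (-(Q x) * u x) x)
    (hQ : ∀ x ∈ Set.Icc a (a + Real.pi / k), k ^ 2 < Q x) :
    ∃ x ∈ Set.Ioo a (a + Real.pi / k), u x = 0 := by
  set b := a + Real.pi / k with hb
  have hab : a < b := by have := div_pos Real.pi_pos hk; linarith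
  have hkb : k * (b - a) = Real.pi := by rw [hb]; field_simp; ring
  have key : ∀ v v' : ℝ → ℝ, (∀ x ∈ Set.Icc a b, HasDerivAt v (v' x) x) →
      (∀ x ∈ Set.Icc a b, HasDerivAt v' (-(Q x) * v x) x) →
      (∀ x ∈ Set.Ioo a b, 0 < v x) → False := by
    intro v v' hv hv' hpos
    have hnonneg : ∀ x ∈ Set.Icc a b, 0 ≤ v x := by
      rw [← closure_Ioo hab.ne]
      have hc : ContinuousOn v (closure (Set.Ioo a b)) := by
        rw [closure_Ioo hab.ne]
        exact fun x hx => (hv x hx).continuousAt.continuousWithinAt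
      exact fun x hx => le_on_closure (fun y hy => (hpos y hy).le) continuousOn_const hc hx
    have hW : ∀ x ∈ Set.Icc a b,
        HasDerivAt (fun x => v' x * Real.sin (k * (x - a)) - v x * (k * Real.cos (k * (x - a))))
          ((k ^ 2 - Q x) * v x * Real.sin (k * (x - a))) x := by
      intro x hx
      have hl : HasDerivAt (fun x => k * (x - a)) k x := by
        simpa using ((hasDerivAt_id x).sub_const a).const_mul k
      exact (((hv' x hx).mul hl.sin).sub ((hv x hx).mul (hl.cos.const_mul k))).congr_deriv (by ring)
    have hanti := strictAntiOn_of_deriv_neg (convex_Icc a b)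
      (fun x hx => (hW x hx).continuousAt.continuousWithinAt) (by
        intro x hx
        rw [interior_Icc] at hx
        have hx' := Set.Ioo_subset_Icc_self hx
        rw [(hW x hx').deriv]
        have hs : 0 < Real.sin (k * (x - a)) := by
          refine Real.sin_pos_of_pos_of_lt_pi (mul_pos hk (by linarith [hx.1])) ?_
          rw [← hkb]
          exact mul_lt_mul_of_pos_left (by linarith [hx.2]) hk
        exact mul_neg_of_neg_of_pos (mul_neg_of_neg_of_pos (by linarith [hQ x hx']) (hpos x hx)) hs)
    have hlt := hanti (Set.left_mem_Icc.2 hab.le) (Set.right_mem_Icc.2 hab.le) hab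
    simp only [hkb, sub_self, mul_zero, Real.sin_pi, Real.cos_pi, Real.sin_zero,
      Real.cos_zero] at hlt
    have h1 := mul_nonneg hk.le (hnonneg a (Set.left_mem_Icc.2 hab.le))
    have h2 := mul_nonneg hk.le (hnonneg b (Set.right_mem_Icc.2 hab.le))
    linarith
  by_contra! hne
  have hcont : ContinuousOn u (Set.Ioo a b) := fun x hx =>
    (hu x (Set.Ioo_subset_Icc_self hx)).continuousAt.continuousWithinAt
  have hsign : (∀ x ∈ Set.Ioo a b, 0 < u x) ∨ ∀ x ∈ Set.Ioo a b, u x < 0 := by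
    by_contra! h
    obtain ⟨⟨x, hx, hx0⟩, y, hy, hy0⟩ := h
    obtain ⟨z, hz, hz0⟩ := isPreconnected_Ioo.intermediate_value hx hy hcont ⟨hx0, hy0⟩
    exact hne z hz hz0
  rcases hsign with h | h
  · exact key u u' hu hu' h
  · refine key (-u) (-u') (fun x hx => (hu x hx).neg) (fun x hx => ?_) fun x hx => ?_
    · simpa using (hu' x hx).neg
    · simpa using h x hx

/-- The potential of the equation `u'' + Q u = 0` solved by
`u x = |x| ^ (γ / 2) * exp (-x ^ 2 / 2) * K_n x`. -/
noncomputable def genHermitePotential (γ : ℝ) (n : ℕ) (x : ℝ) : ℝ :=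
  2 * n + 1 + γ - x ^ 2 - (γ ^ 2 / 4 - γ / 2 + genHermiteShift γ n) / x ^ 2

lemma exists_genHermite_root {γ k a : ℝ} {n : ℕ} (ha : 0 < a) (hk : 0 < k)
    (hQ : ∀ x ∈ Set.Icc a (a + Real.pi / k), k ^ 2 < genHermitePotential γ n x) :
    ∃ x ∈ Set.Ioo a (a + Real.pi / k), (genHermite γ n).eval x = 0 := by
  let g : ℝ → ℝ := fun x => Real.exp (γ / 2 * Real.log x - x ^ 2 / 2)
  have hg : ∀ x, 0 < x → HasDerivAt g (g x * (γ / 2 * x⁻¹ - x)) x := by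
    intro x hx
    have h : HasDerivAt g _ x := (((Real.hasDerivAt_log hx.ne').const_mul (γ / 2)).sub
      ((hasDerivAt_pow 2 x).div_const 2)).exp
    refine h.congr_deriv ?_
    simp only [g, Pi.sub_apply]
    field_simp
    push_cast
    ring
  have hr : ∀ x, 0 < x → HasDerivAt (fun x => γ / 2 * x⁻¹ - x) (γ / 2 * -(x ^ 2)⁻¹ - 1) x :=
    fun x hx => ((hasDerivAt_inv hx.ne').const_mul (γ / 2)).sub (hasDerivAt_id x)
  obtain ⟨x, hx, hx0⟩ := exists_zero_of_lt_sturm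
    (u := fun x => g x * (genHermite γ n).eval x)
    (u' := fun x => g x * ((γ / 2 * x⁻¹ - x) * (genHermite γ n).eval x +
      (derivative (genHermite γ n)).eval x)) hk
    (fun x hx => ((hg x (ha.trans_le hx.1)).mul
      ((genHermite γ n).hasDerivAt x)).congr_deriv (by ring))
    (fun x hx => by
      have hx0 := ha.trans_le hx.1
      refine ((hg x hx0).mul (((hr x hx0).mul ((genHermite γ n).hasDerivAt x)).add
        ((derivative (genHermite γ n)).hasDerivAt x))).congr_deriv ?_
      have ode : (derivative (derivative (genHermite γ n))).eval x =
          -((γ * x - 2 * x ^ 3) * (derivative (genHermite γ n)).eval x +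
            (2 * n * x ^ 2 - genHermiteShift γ n) * (genHermite γ n).eval x) / x ^ 2 := by
        rw [eq_div_iff (by positivity)]
        linear_combination genHermite_ode γ n x
      simp only [ode, genHermitePotential, Pi.add_apply, Pi.mul_apply]
      field_simp
      ring) hQ
  exact ⟨x, hx, (mul_eq_zero.1 hx0).resolve_left (Real.exp_ne_zero _)⟩

lemma sub_one_le_card_filter {S : Finset ℝ} {a b h : ℝ} (hh : 0 < h)
    (H : ∀ x, a ≤ x → x + h ≤ b → ∃ z ∈ Set.Ioo x (x + h), z ∈ S) :
    (b - a) / h - 1 ≤ (S.filter fun z => a < z ∧ z < b).card := by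
  set n := ⌊(b - a) / h⌋₊ with hn
  have hlt : (b - a) / h < n + 1 := Nat.lt_floor_add_one _
  have hle : ∀ i < n, a + i * h + h ≤ b := by
    intro i hi
    have h1 : ((i + 1 : ℕ) : ℝ) ≤ (b - a) / h := (Nat.le_floor_iff' i.succ_ne_zero).1 hi
    rw [le_div_iff₀ hh] at h1
    push_cast at h1
    linarith
  have H' : ∀ i : ℕ, ∃ z, i < n → z ∈ Set.Ioo (a + i * h) (a + i * h + h) ∧ z ∈ S := by
    intro i
    by_cases hi : i < n
    · obtain ⟨z, hz⟩ := H (a + i * h) (by have : 0 ≤ i * h := by positivity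
                                          linarith) (hle i hi)
      exact ⟨z, fun _ => hz⟩
    · exact ⟨0, fun h => absurd h hi⟩
  choose z hz using H'
  have hmono : ∀ i < n, ∀ j < n, i < j → z i < z j := by
    intro i hi j hj hij
    have h1 := (hz i hi).1.2
    have h2 := (hz j hj).1.1
    have h3 : ((i : ℝ) + 1) * h ≤ j * h := by
      gcongr
      exact_mod_cast hij
    linarith
  have hcard : (Finset.range n).card ≤ (S.filter fun z => a < z ∧ z < b).card := by
    refine Finset.card_le_card_of_injOn z (fun i hi => ?_) (fun i hi j hj hij => ?_)
    · have hi' : i < n := by simpa using hi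
      have h1 := (hz i hi').1
      have h2 := hle i hi'
      have h3 : 0 ≤ i * h := by positivity
      simp only [Finset.coe_filter, Set.mem_ofPred_eq]
      exact ⟨(hz i hi').2, by linarith [h1.1], by linarith [h1.2]⟩
    · have hi' : i < n := by simpa using hi
      have hj' : j < n := by simpa using hj
      rcases lt_trichotomy i j with h | h | h
      · exact absurd hij (hmono i hi' j hj' h).ne
      · exact h
      · exact absurd hij (hmono j hj' i hi' h).ne'
  rw [Finset.card_range] at hcard
  have : (n : ℝ) ≤ (S.filter fun z => a < z ∧ z < b).card := by exact_mod_cast hcard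
  linarith

/-- The number of distinct zeros of `K_l^{(γ)}` in `(√l a, √l b)`. -/
noncomputable def scaledRootCount (γ : ℝ) (l : ℕ) (a b : ℝ) : ℕ :=
  ((genHermite γ l).roots.toFinset.filter fun z => √l * a < z ∧ z < √l * b).card

/-- The limiting density, up to the factor `1 / π`. -/
noncomputable def genHermiteDensity (c x : ℝ) : ℝ :=
  √((c + 1) - (x ^ 2 - c / 2 - 1) ^ 2) / |x|

lemma genHermiteDensity_nonneg (c x : ℝ) : 0 ≤ genHermiteDensity c x := by
  unfold genHermiteDensity; positivity

lemma sq_le_of_le_genHermiteDensity {c x k : ℝ} (hx : x ≠ 0) (hk : 0 < k)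
    (h : k ≤ genHermiteDensity c x) : k ^ 2 ≤ c + 2 - x ^ 2 - c ^ 2 / 4 / x ^ 2 := by
  have hpos : 0 < (c + 1) - (x ^ 2 - c / 2 - 1) ^ 2 := by
    by_contra! hneg
    rw [genHermiteDensity, Real.sqrt_eq_zero_of_nonpos hneg, zero_div] at h
    linarith
  calc k ^ 2 ≤ genHermiteDensity c x ^ 2 := by gcongr
    _ = c + 2 - x ^ 2 - c ^ 2 / 4 / x ^ 2 := by
      rw [genHermiteDensity, div_pow, Real.sq_sqrt hpos.le, sq_abs]
      field_simp
      ring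

lemma eventually_lt_genHermitePotential {γ : ℕ → ℝ} {c a b k K : ℝ}
    (hlim : Tendsto (fun l : ℕ => γ l / l) atTop (nhds c)) (ha : 0 < a) (hk : 0 < k) (hkK : k < K)
    (hK : ∀ t ∈ Set.Icc a b, K ≤ genHermiteDensity c t) :
    ∀ᶠ l : ℕ in atTop, ∀ t ∈ Set.Icc a b,
      (k * √l) ^ 2 < genHermitePotential (γ l) l (√l * t) := by
  have hinv : Tendsto (fun l : ℕ => 1 / (l : ℝ)) atTop (nhds 0) := tendsto_one_div_atTop_nhds_zero_nat
  have hE : Tendsto (fun l : ℕ => (γ l / l) ^ 2 / 4 + |γ l / l| * (1 / l) / 2 - c ^ 2 / 4)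
      atTop (nhds 0) := by
    have := ((((hlim.pow 2).div_const 4).add ((hlim.abs.mul hinv).div_const 2))).sub_const (c ^ 2 / 4)
    simpa using this
  have hG := (hinv.add (hlim.sub_const c)).sub (hE.abs.div_const (a ^ 2))
  simp only [sub_self, add_zero, abs_zero, zero_div] at hG
  have hlt : k ^ 2 - K ^ 2 < 0 := by nlinarith
  filter_upwards [hG.eventually (lt_mem_nhds hlt), eventually_gt_atTop 0] with l hl hl0 t ht
  have hl0' : (0 : ℝ) < l := by exact_mod_cast hl0
  have ht0 : 0 < t := ha.trans_le ht.1
  have hKt := sq_le_of_le_genHermiteDensity ht0.ne' (hk.trans hkK) (hK t ht)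
  set E := (γ l / l) ^ 2 / 4 + |γ l / l| * (1 / l) / 2 - c ^ 2 / 4 with hEdef
  have hD : (γ l ^ 2 / 4 - γ l / 2 + genHermiteShift (γ l) l) / l ^ 2 ≤ c ^ 2 / 4 + |E| := by
    have hs : -(γ l) / 2 + genHermiteShift (γ l) l ≤ |γ l| / 2 := by
      unfold genHermiteShift
      split_ifs
      · linarith [neg_le_abs (γ l)]
      · linarith [le_abs_self (γ l)]
    calc (γ l ^ 2 / 4 - γ l / 2 + genHermiteShift (γ l) l) / l ^ 2
        ≤ (γ l ^ 2 / 4 + |γ l| / 2) / l ^ 2 := by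
          refine div_le_div_of_nonneg_right ?_ (by positivity)
          linarith
      _ = c ^ 2 / 4 + E := by
        rw [hEdef, abs_div, abs_of_pos hl0']
        field_simp
        ring
      _ ≤ _ := by linarith [le_abs_self E]
  have hDt : (γ l ^ 2 / 4 - γ l / 2 + genHermiteShift (γ l) l) / l ^ 2 / t ^ 2 ≤
      c ^ 2 / 4 / t ^ 2 + |E| / a ^ 2 := by
    calc _ ≤ (c ^ 2 / 4 + |E|) / t ^ 2 := by gcongr
      _ = c ^ 2 / 4 / t ^ 2 + |E| / t ^ 2 := add_div _ _ _
      _ ≤ _ := by gcongr; exact ht.1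
  have hsq : √(l : ℝ) ^ 2 = l := Real.sq_sqrt hl0'.le
  have hQ : genHermitePotential (γ l) l (√l * t) = l * (2 + 1 / l + γ l / l - t ^ 2 -
      (γ l ^ 2 / 4 - γ l / 2 + genHermiteShift (γ l) l) / l ^ 2 / t ^ 2) := by
    rw [genHermitePotential, mul_pow, hsq]
    field_simp
  rw [hQ, mul_pow, hsq, mul_comm]
  refine mul_lt_mul_of_pos_left ?_ hl0'
  linarith

lemma eventually_le_scaledRootCount_of_pos {γ : ℕ → ℝ} {c a b k K : ℝ}
    (hlim : Tendsto (fun l : ℕ => γ l / l) atTop (nhds c)) (ha : 0 < a) (hab : a < b)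
    (hkK : k < K) (hK : ∀ t ∈ Set.Icc a b, K ≤ genHermiteDensity c t) :
    ∀ᶠ l : ℕ in atTop, k * (b - a) / Real.pi ≤ scaledRootCount (γ l) l a b / l := by
  have hπ := Real.pi_pos
  rcases le_or_gt k 0 with hk | hk
  · refine Eventually.of_forall fun l => le_trans ?_ (by positivity : (0 : ℝ) ≤ _)
    exact div_nonpos_of_nonpos_of_nonneg (mul_nonpos_of_nonpos_of_nonneg hk (by linarith)) hπ.le
  obtain ⟨k₁, hk₁, hk₁K⟩ := exists_between hkK
  have hk₁0 := hk.trans hk₁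
  have hinv : Tendsto (fun l : ℕ => 1 / (l : ℝ)) atTop (nhds 0) := tendsto_one_div_atTop_nhds_zero_nat
  have hpos : 0 < (k₁ - k) * (b - a) / Real.pi :=
    div_pos (mul_pos (by linarith) (by linarith)) hπ
  filter_upwards [eventually_lt_genHermitePotential hlim ha hk₁0 hk₁K hK,
    hinv.eventually (gt_mem_nhds hpos), eventually_gt_atTop 0] with l hl hl1 hl0
  have hl0' : (0 : ℝ) < l := by exact_mod_cast hl0
  have hs : 0 < √(l : ℝ) := Real.sqrt_pos.2 hl0'
  have hcount := sub_one_le_card_filter (S := (genHermite (γ l) l).roots.toFinset)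
    (a := √l * a) (b := √l * b) (h := Real.pi / (k₁ * √l)) (by positivity) (by
      intro x hx hxb
      obtain ⟨z, hz, hz0⟩ := exists_genHermite_root (γ := γ l) (n := l) (k := k₁ * √l) (a := x)
        ((mul_pos hs ha).trans_le hx) (by positivity) (by
          intro t ht
          have := hl (t / √l) ⟨by rw [le_div_iff₀ hs]; linarith [ht.1],
            by rw [div_le_iff₀ hs]; linarith [ht.2]⟩
          rwa [mul_div_cancel₀ _ hs.ne'] at this)
      refine ⟨z, hz, ?_⟩
      simpa [genHermite_ne_zero] using hz0)
  rw [le_div_iff₀ hl0']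
  refine le_trans ?_ hcount
  have e : (√l * b - √l * a) / (Real.pi / (k₁ * √l)) = k₁ * (b - a) / Real.pi * l := by
    rw [← Real.sq_sqrt hl0'.le]
    field_simp
    simp
  rw [e]
  rw [div_lt_iff₀ hl0'] at hl1
  have : (k₁ - k) * (b - a) / Real.pi * l =
    k₁ * (b - a) / Real.pi * l - k * (b - a) / Real.pi * l := by ring
  linarith

lemma scaledRootCount_add_le (γ : ℝ) (l : ℕ) {a b d : ℝ} (hab : a ≤ b) (hbd : b ≤ d) :
    scaledRootCount γ l a b + scaledRootCount γ l b d ≤ scaledRootCount γ l a d := by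
  have hab' : √(l : ℝ) * a ≤ √l * b := by gcongr
  have hbd' : √(l : ℝ) * b ≤ √l * d := by gcongr
  unfold scaledRootCount
  rw [← Finset.card_union_of_disjoint]
  · refine Finset.card_le_card fun z hz => ?_
    simp only [Finset.mem_union, Finset.mem_filter] at hz ⊢
    rcases hz with ⟨h, h1, h2⟩ | ⟨h, h1, h2⟩
    · exact ⟨h, h1, h2.trans_le hbd'⟩
    · exact ⟨h, hab'.trans_lt h1, h2⟩
  · rw [Finset.disjoint_left]
    intro z hz hz'
    exact absurd (Finset.mem_filter.1 hz).2.2 (Finset.mem_filter.1 hz').2.1.not_gt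

lemma scaledRootCount_neg (γ : ℝ) (l : ℕ) (a b : ℝ) :
    scaledRootCount γ l (-b) (-a) = scaledRootCount γ l a b := by
  unfold scaledRootCount
  refine Finset.card_bij' (fun z _ => -z) (fun z _ => -z) ?_ ?_ (by simp) (by simp)
  all_goals
    intro z hz
    simp only [Finset.mem_filter, Multiset.mem_toFinset, mem_roots (genHermite_ne_zero γ l),
      IsRoot.def, genHermite_eval_neg] at hz ⊢
    refine ⟨by simp [hz.1], by linarith, by linarith⟩

lemma genHermiteDensity_neg (c x : ℝ) : genHermiteDensity c (-x) = genHermiteDensity c x := by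
  simp [genHermiteDensity]

lemma genHermiteDensity_le {c : ℝ} (x : ℝ) :
    genHermiteDensity c x ≤ √(c + 2) := by
  rcases eq_or_ne x 0 with rfl | hx
  · simp [genHermiteDensity]
  rcases (genHermiteDensity_nonneg c x).eq_or_lt with h | h
  · rw [← h]; positivity
  · have := sq_le_of_le_genHermiteDensity hx h le_rfl
    refine Real.le_sqrt_of_sq_le (this.trans ?_)
    have : 0 ≤ c ^ 2 / 4 / x ^ 2 := by positivity
    linarith [sq_nonneg x]

lemma continuousAt_genHermiteDensity (c : ℝ) {x : ℝ} (hx : x ≠ 0) :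
    ContinuousAt (genHermiteDensity c) x := by
  unfold genHermiteDensity
  exact ContinuousAt.div (by fun_prop) (by fun_prop) (by simpa using hx)

lemma intervalIntegrable_genHermiteDensity (c a b : ℝ) :
    IntervalIntegrable (genHermiteDensity c) volume a b := by
  refine (intervalIntegrable_const (c := √(c + 2))).mono_fun ?_ ?_
  · refine Measurable.aestronglyMeasurable ?_
    unfold genHermiteDensity
    fun_prop
  · refine Eventually.of_forall fun x => ?_
    beta_reduce
    rw [Real.norm_of_nonneg (genHermiteDensity_nonneg c x), Real.norm_of_nonneg (by positivity)]
    exact genHermiteDensity_le x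

lemma eventually_integral_sub_le_of_pos {γ : ℕ → ℝ} {c a b ε : ℝ}
    (hlim : Tendsto (fun l : ℕ => γ l / l) atTop (nhds c)) (ha : 0 < a) (hab : a < b)
    (hε : 0 < ε) :
    ∀ᶠ l : ℕ in atTop, (∫ t in a..b, genHermiteDensity c t) / Real.pi - 3 * ε * (b - a) / Real.pi ≤
      scaledRootCount (γ l) l a b / l := by
  have hπ := Real.pi_pos
  have hcont : ContinuousOn (genHermiteDensity c) (Set.Icc a b) := fun x hx =>
    (continuousAt_genHermiteDensity c (ha.trans_le hx.1).ne').continuousWithinAt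
  obtain ⟨δ, hδ, hunif⟩ := Metric.uniformContinuousOn_iff.1
    (isCompact_Icc.uniformContinuousOn_of_continuous hcont) ε hε
  obtain ⟨n, hn⟩ := exists_nat_gt ((b - a) / δ)
  have hn0 : (0 : ℝ) < n := (div_nonneg (by linarith) hδ.le).trans_lt hn
  set h := (b - a) / n with hh
  have hh0 : 0 < h := div_pos (by linarith) hn0
  have hhδ : h < δ := by
    rw [hh, div_lt_iff₀ hn0]
    rwa [div_lt_iff₀ hδ, mul_comm] at hn
  have hnh : a + n * h = b := by rw [hh]; field_simp; ring
  have step : ∀ i : ℕ, i ≤ n → ∀ᶠ l : ℕ in atTop,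
      (∫ t in a..(a + i * h), genHermiteDensity c t) / Real.pi - 3 * ε * (i * h) / Real.pi ≤
        scaledRootCount (γ l) l a (a + i * h) / l := by
    intro i
    induction i with
    | zero =>
      intro _
      refine Eventually.of_forall fun l => ?_
      simp
      positivity
    | succ i ih =>
      intro hi
      have hih : 0 ≤ i * h := by positivity
      set s := a + i * h with hs
      have hs1 : a + ((i + 1 : ℕ) : ℝ) * h = s + h := by rw [hs]; push_cast; ring
      have hsb : s + h ≤ b := by
        rw [← hs1, ← hnh]
        gcongr
      have hsI : s ∈ Set.Icc a b := ⟨by linarith, by linarith⟩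
      have hclose : ∀ t ∈ Set.Icc s (s + h),
          |genHermiteDensity c t - genHermiteDensity c s| < ε := by
        intro t ht
        have := hunif t ⟨by linarith [ht.1, hsI.1], by linarith [ht.2]⟩ s hsI (by
          rw [Real.dist_eq, abs_of_nonneg (by linarith [ht.1])]
          linarith [ht.2])
        rwa [Real.dist_eq] at this
      have hlow := eventually_le_scaledRootCount_of_pos (a := s) (b := s + h)
        (k := genHermiteDensity c s - 2 * ε) (K := genHermiteDensity c s - ε) hlim
        (ha.trans_le hsI.1) (by linarith) (by linarith)
        (fun t ht => by linarith [(abs_lt.1 (hclose t ht)).1])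
      have hint : ∫ t in s..(s + h), genHermiteDensity c t ≤ (genHermiteDensity c s + ε) * h := by
        have := intervalIntegral.integral_mono_on (μ := volume) (by linarith : s ≤ s + h)
          (intervalIntegrable_genHermiteDensity c s (s + h))
          (intervalIntegrable_const (c := genHermiteDensity c s + ε))
          (fun t ht => by linarith [(abs_lt.1 (hclose t ht)).2])
        rw [intervalIntegral.integral_const] at this
        simpa [mul_comm] using this
      filter_upwards [ih (by omega), hlow] with l h1 h2
      have h3 : (scaledRootCount (γ l) l a s : ℝ) / l + scaledRootCount (γ l) l s (s + h) / l ≤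
          scaledRootCount (γ l) l a (s + h) / l := by
        rw [← add_div]
        gcongr
        exact_mod_cast scaledRootCount_add_le (γ l) l hsI.1 (by linarith : s ≤ s + h)
      rw [hs1, ← intervalIntegral.integral_add_adjacent_intervals
        (intervalIntegrable_genHermiteDensity c a s)
        (intervalIntegrable_genHermiteDensity c s (s + h))]
      refine le_trans ?_ ((add_le_add h1 h2).trans h3)
      rw [← sub_div, ← sub_div, ← add_div]
      refine div_le_div_of_nonneg_right ?_ hπ.le
      push_cast
      linarith
  have := step n le_rfl
  rw [hnh] at this
  filter_upwards [this] with l hl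
  rwa [show b - a = n * h by linarith]

lemma integral_genHermiteDensity_le {c a b : ℝ} (hab : a ≤ b) :
    ∫ t in a..b, genHermiteDensity c t ≤ √(c + 2) * (b - a) := by
  have := intervalIntegral.integral_mono_on (μ := volume) hab
    (intervalIntegrable_genHermiteDensity c a b)
    (intervalIntegrable_const (c := √(c + 2))) (fun t _ => genHermiteDensity_le t)
  rw [intervalIntegral.integral_const] at this
  simpa [mul_comm] using this

lemma eventually_integral_sub_le_of_nonneg {γ : ℕ → ℝ} {c a b ε : ℝ}
    (hlim : Tendsto (fun l : ℕ => γ l / l) atTop (nhds c)) (ha : 0 ≤ a) (hab : a ≤ b)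
    (hε : 0 < ε) :
    ∀ᶠ l : ℕ in atTop, (∫ t in a..b, genHermiteDensity c t) / Real.pi - ε ≤
      scaledRootCount (γ l) l a b / l := by
  have hπ := Real.pi_pos
  set δ := ε * Real.pi / 2 / (√(c + 2) + 1) with hδ
  have hδ0 : 0 < δ := by positivity
  have hδle : √(c + 2) * δ ≤ ε * Real.pi / 2 := by
    rw [hδ, mul_div_assoc', div_le_iff₀ (by positivity)]
    nlinarith [mul_pos hε hπ]
  have hsmall : ∀ d, a ≤ d → d ≤ a + δ →
      ∫ t in a..d, genHermiteDensity c t ≤ ε * Real.pi / 2 := by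
    intro d had hd
    refine (integral_genHermiteDensity_le had).trans (le_trans ?_ hδle)
    gcongr
    linarith
  rcases le_or_gt b (a + δ) with hb | hb
  · refine Eventually.of_forall fun l => le_trans ?_ (by positivity : (0 : ℝ) ≤ _)
    rw [sub_nonpos, div_le_iff₀ hπ]
    linarith [hsmall b hab hb, mul_pos hε hπ]
  · have hba : 0 < b - (a + δ) := by linarith
    filter_upwards [eventually_integral_sub_le_of_pos (a := a + δ) (b := b)
      (ε := ε * Real.pi / 6 / (b - (a + δ))) hlim (by linarith) hb (by positivity)] with l hl
    have hmono : (scaledRootCount (γ l) l (a + δ) b : ℝ) / l ≤ scaledRootCount (γ l) l a b / l := by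
      gcongr
      have := scaledRootCount_add_le (γ l) l (by linarith : a ≤ a + δ) hb.le
      omega
    refine le_trans ?_ (hl.trans hmono)
    rw [← intervalIntegral.integral_add_adjacent_intervals
      (intervalIntegrable_genHermiteDensity c a (a + δ))
      (intervalIntegrable_genHermiteDensity c (a + δ) b)]
    have h1 := hsmall (a + δ) (by linarith) le_rfl
    have h2 : 3 * (ε * Real.pi / 6 / (b - (a + δ))) * (b - (a + δ)) / Real.pi = ε / 2 := by
      field_simp
      ring
    rw [h2, add_div]
    have h3 : (∫ t in a..(a + δ), genHermiteDensity c t) / Real.pi ≤ ε / 2 := by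
      rw [div_le_iff₀ hπ]
      linarith
    linarith

lemma eventually_integral_sub_le_of_nonpos {γ : ℕ → ℝ} {c a b ε : ℝ}
    (hlim : Tendsto (fun l : ℕ => γ l / l) atTop (nhds c)) (hb : b ≤ 0) (hab : a ≤ b)
    (hε : 0 < ε) :
    ∀ᶠ l : ℕ in atTop, (∫ t in a..b, genHermiteDensity c t) / Real.pi - ε ≤
      scaledRootCount (γ l) l a b / l := by
  have h := eventually_integral_sub_le_of_nonneg (a := -b) (b := -a) hlim
    (by linarith) (by linarith) hε
  have hint : ∫ t in (-b)..(-a), genHermiteDensity c t = ∫ t in a..b, genHermiteDensity c t := by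
    simpa only [genHermiteDensity_neg] using
      (intervalIntegral.integral_comp_neg (a := a) (b := b) (genHermiteDensity c)).symm
  simpa only [scaledRootCount_neg, hint] using h

/-- The asymptotic lower bound for the number of zeros in an interval. -/
lemma eventually_integral_sub_le {γ : ℕ → ℝ} {c a b ε : ℝ}
    (hlim : Tendsto (fun l : ℕ => γ l / l) atTop (nhds c)) (hab : a ≤ b) (hε : 0 < ε) :
    ∀ᶠ l : ℕ in atTop, (∫ t in a..b, genHermiteDensity c t) / Real.pi - ε ≤
      scaledRootCount (γ l) l a b / l := by
  rcases le_total 0 a with ha | ha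
  · exact eventually_integral_sub_le_of_nonneg hlim ha hab hε
  rcases le_total b 0 with hb | hb
  · exact eventually_integral_sub_le_of_nonpos hlim hb hab hε
  filter_upwards [eventually_integral_sub_le_of_nonneg hlim le_rfl hb (half_pos hε),
    eventually_integral_sub_le_of_nonpos hlim le_rfl ha (half_pos hε)] with l h1 h2
  have h3 : (scaledRootCount (γ l) l a 0 : ℝ) / l + scaledRootCount (γ l) l 0 b / l ≤
      scaledRootCount (γ l) l a b / l := by
    rw [← add_div]
    gcongr
    exact_mod_cast scaledRootCount_add_le (γ l) l ha hb
  rw [← intervalIntegral.integral_add_adjacent_intervals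
    (intervalIntegrable_genHermiteDensity c a 0) (intervalIntegrable_genHermiteDensity c 0 b),
    add_div]
  linarith

/-- The right half of the limiting density has mass `π / 2`. -/
lemma integral_genHermiteDensity_support {c : ℝ} (hc : 0 ≤ c) :
    ∫ t in √(c / 2 + 1 - √(c + 1))..√(c / 2 + 1 + √(c + 1)), genHermiteDensity c t =
      Real.pi / 2 := by
  set m := c / 2 + 1 with hm
  set r := √(c + 1) with hr
  have hr2 : r ^ 2 = c + 1 := Real.sq_sqrt (by linarith)
  have hr0 : 0 < r := Real.sqrt_pos.2 (by linarith)
  have hmr2 : m ^ 2 - r ^ 2 = c ^ 2 / 4 := by rw [hr2, hm]; ring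
  have hmr : r ≤ m := by
    refine abs_le_of_sq_le_sq' (by nlinarith [sq_nonneg c]) (by positivity) |>.2
  set α := √(m - r) with hα
  set β := √(m + r) with hβ
  have hα2 : α ^ 2 = m - r := Real.sq_sqrt (by linarith)
  have hβ2 : β ^ 2 = m + r := Real.sq_sqrt (by linarith)
  have hα0 : 0 ≤ α := Real.sqrt_nonneg _
  have hαβ : α ≤ β := Real.sqrt_le_sqrt (by linarith)
  have hβ0 : 0 < β := Real.sqrt_pos.2 (by linarith)
  have hα_pos : c ≠ 0 → 0 < α := fun h => Real.sqrt_pos.2 (by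
    have : 0 < c ^ 2 / 4 := by positivity
    nlinarith)
  let F : ℝ → ℝ := fun t => (√(r ^ 2 - (t ^ 2 - m) ^ 2) + m * Real.arcsin ((t ^ 2 - m) / r) -
    c / 2 * Real.arcsin ((m - c ^ 2 / 4 / t ^ 2) / r)) / 2
  have hcont : ContinuousOn F (Set.Icc α β) := by
    have h1 : Continuous fun t : ℝ =>
        √(r ^ 2 - (t ^ 2 - m) ^ 2) + m * Real.arcsin ((t ^ 2 - m) / r) := by fun_prop
    have h2 : ContinuousOn (fun t : ℝ => c / 2 * Real.arcsin ((m - c ^ 2 / 4 / t ^ 2) / r))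
        (Set.Icc α β) := by
      rcases eq_or_ne c 0 with h | h
      · simp only [h, zero_div, zero_mul]
        exact continuousOn_const
      · refine continuousOn_const.mul (Real.continuous_arcsin.comp_continuousOn ?_)
        refine (continuousOn_const.sub (continuousOn_const.div (by fun_prop) ?_)).div_const r
        intro t ht
        have := (hα_pos h).trans_le ht.1
        positivity
    exact (h1.continuousOn.sub h2).div_const 2
  have hderiv : ∀ t ∈ Set.Ioo α β, HasDerivAt F (genHermiteDensity c t) t := by
    intro t ht
    have ht0 : 0 < t := hα0.trans_lt ht.1
    have hl : m - r < t ^ 2 := by rw [← hα2]; exact pow_lt_pow_left₀ ht.1 hα0 two_ne_zero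
    have hu : t ^ 2 < m + r := by rw [← hβ2]; exact pow_lt_pow_left₀ ht.2 ht0.le two_ne_zero
    have hw : 0 < r ^ 2 - (t ^ 2 - m) ^ 2 := by nlinarith
    set w := r ^ 2 - (t ^ 2 - m) ^ 2 with hwdef
    have hs : 0 < √w := Real.sqrt_pos.2 hw
    have hs2 : √w ^ 2 = w := Real.sq_sqrt hw.le
    have hinner : HasDerivAt (fun t : ℝ => t ^ 2 - m) (2 * t) t := by
      simpa using (hasDerivAt_pow 2 t).sub_const m
    have d1 : HasDerivAt (fun t : ℝ => √(r ^ 2 - (t ^ 2 - m) ^ 2))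
        (-(2 * t * (t ^ 2 - m)) / √w) t := by
      refine (((hinner.pow 2).const_sub (r ^ 2)).sqrt hw.ne').congr_deriv ?_
      change _ / (2 * √w) = _
      field_simp
      push_cast
      ring
    have hsqrt1 : √(1 - ((t ^ 2 - m) / r) ^ 2) = √w / r := by
      rw [show 1 - ((t ^ 2 - m) / r) ^ 2 = w / r ^ 2 by rw [hwdef]; field_simp,
        Real.sqrt_div hw.le, Real.sqrt_sq hr0.le]
    have d2 : HasDerivAt (fun t : ℝ => Real.arcsin ((t ^ 2 - m) / r)) (2 * t / √w) t := by
      have hne1 : (t ^ 2 - m) / r ≠ -1 := by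
        rw [Ne, div_eq_iff hr0.ne']; intro h; linarith
      have hne2 : (t ^ 2 - m) / r ≠ 1 := by
        rw [Ne, div_eq_iff hr0.ne']; intro h; linarith
      refine ((Real.hasDerivAt_arcsin hne1 hne2).comp t (hinner.div_const r)).congr_deriv ?_
      rw [hsqrt1]
      field_simp
    have d3 : HasDerivAt (fun t : ℝ => c / 2 * Real.arcsin ((m - c ^ 2 / 4 / t ^ 2) / r))
        (c ^ 2 / 2 / (t * √w)) t := by
      rcases hc.eq_or_lt with h | h
      · simpa only [← h, zero_div, zero_mul, zero_pow two_ne_zero] using hasDerivAt_const t (0 : ℝ)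
      have hdiff : 1 - ((m - c ^ 2 / 4 / t ^ 2) / r) ^ 2 = (c / 2 * √w / (r * t ^ 2)) ^ 2 := by
        have e : r ^ 2 * t ^ 4 - (m * t ^ 2 - c ^ 2 / 4) ^ 2 = c ^ 2 / 4 * w := by
          rw [← hmr2, hwdef]; ring
        rw [div_pow (c / 2 * √w), mul_pow, hs2]
        field_simp
        linear_combination 64 * e
      have hdiff_pos : 0 < 1 - ((m - c ^ 2 / 4 / t ^ 2) / r) ^ 2 := by rw [hdiff]; positivity
      have hne1 : (m - c ^ 2 / 4 / t ^ 2) / r ≠ -1 := by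
        intro h; rw [h] at hdiff_pos; norm_num at hdiff_pos
      have hne2 : (m - c ^ 2 / 4 / t ^ 2) / r ≠ 1 := by
        intro h; rw [h] at hdiff_pos; norm_num at hdiff_pos
      have hin : HasDerivAt (fun t : ℝ => (m - c ^ 2 / 4 / t ^ 2) / r)
          (c ^ 2 / 2 / t ^ 3 / r) t := by
        refine ((((hasDerivAt_pow 2 t).fun_inv (by positivity)).const_mul
          (c ^ 2 / 4)).const_sub m |>.div_const r).congr_deriv ?_
        field_simp
        push_cast
        ring
      refine (((Real.hasDerivAt_arcsin hne1 hne2).comp t hin).const_mul (c / 2)).congr_deriv ?_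
      rw [hdiff, Real.sqrt_sq (by positivity)]
      field_simp
    refine (((d1.add (d2.const_mul m)).sub d3).div_const 2).congr_deriv ?_
    have hf : genHermiteDensity c t = √w / t := by
      rw [genHermiteDensity, abs_of_pos ht0, hwdef, hr2, hm]
      ring_nf
    rw [hf]
    field_simp
    rw [hs2]
    linear_combination 2 * hmr2 - 2 * hwdef - 2 * hr2
  rw [intervalIntegral.integral_eq_sub_of_hasDerivAt_of_le hαβ hcont hderiv
    (intervalIntegrable_genHermiteDensity c α β)]
  have hF : F β = (m - c / 2) * (Real.pi / 2) / 2 := by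
    have e : m - c ^ 2 / 4 / (m + r) = r := by
      have : m + r ≠ 0 := by linarith
      rw [← hmr2]
      field_simp
      ring
    simp only [F, hβ2, add_sub_cancel_left, sub_self, Real.sqrt_zero, div_self hr0.ne',
      Real.arcsin_one, e]
    ring
  have hF' : F α = -((m - c / 2) * (Real.pi / 2) / 2) := by
    have e0 : m - r - m = -r := by ring
    simp only [F, hα2, e0, neg_div, div_self hr0.ne', Real.arcsin_neg_one, neg_sq, sub_self,
      Real.sqrt_zero]
    rcases eq_or_ne c 0 with h | h
    · simp only [h]
      ring
    · have h1 : 0 < m - r := by rw [← hα2]; have := hα_pos h; positivity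
      have e : m - c ^ 2 / 4 / (m - r) = -r := by
        rw [← hmr2]
        field_simp
        ring
      rw [e, neg_div, div_self hr0.ne', Real.arcsin_neg_one]
      ring
  rw [hF, hF', hm]
  ring

lemma pi_le_integral_genHermiteDensity {c R : ℝ} (hc : 0 ≤ c)
    (hR : √(c / 2 + 1 + √(c + 1)) ≤ R) :
    Real.pi ≤ ∫ t in (-R)..R, genHermiteDensity c t := by
  have hR0 : 0 ≤ R := (Real.sqrt_nonneg _).trans hR
  have hpos : Real.pi / 2 ≤ ∫ t in (0)..R, genHermiteDensity c t := by
    rw [← integral_genHermiteDensity_support hc]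
    refine intervalIntegral.integral_mono_interval (Real.sqrt_nonneg _)
      (Real.sqrt_le_sqrt ?_) hR
      (Eventually.of_forall (genHermiteDensity_nonneg c))
      (intervalIntegrable_genHermiteDensity c 0 R)
    linarith [Real.sqrt_nonneg (c + 1)]
  have hneg : ∫ t in (-R)..0, genHermiteDensity c t = ∫ t in (0)..R, genHermiteDensity c t := by
    simpa [genHermiteDensity_neg] using
      (intervalIntegral.integral_comp_neg (a := 0) (b := R) (genHermiteDensity c)).symm
  rw [← intervalIntegral.integral_add_adjacent_intervals
    (intervalIntegrable_genHermiteDensity c (-R) 0) (intervalIntegrable_genHermiteDensity c 0 R)]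
  linarith

lemma setIntegral_eq_integral_genHermiteDensity {c R y : ℝ}
    (hR : √(c / 2 + 1 + √(c + 1)) ≤ R) (hy : -R ≤ y) :
    ∫ x in {x : ℝ | x ≤ y ∧ (x ^ 2 - c / 2 - 1) ^ 2 < c + 1},
      √((c + 1) - (x ^ 2 - c / 2 - 1) ^ 2) / |x| = ∫ t in (-R)..y, genHermiteDensity c t := by
  rw [intervalIntegral.integral_of_le hy]
  symm
  refine setIntegral_eq_of_subset_of_forall_sdiff_eq_zero measurableSet_Ioc (fun x hx => ?_)
    fun x hx => ?_
  · have hx2 := hx.2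
    have h1 : x ^ 2 - c / 2 - 1 < √(c + 1) := Real.lt_sqrt_of_sq_lt hx.2
    have h2 : |x| < √(c / 2 + 1 + √(c + 1)) :=
      Real.lt_sqrt_of_sq_lt (by rw [sq_abs]; linarith)
    exact ⟨(abs_lt.1 (h2.trans_le hR)).1, hx.1⟩
  · have h : c + 1 ≤ (x ^ 2 - c / 2 - 1) ^ 2 := by
      by_contra! h
      exact hx.2 ⟨hx.1.2, h⟩
    rw [genHermiteDensity, Real.sqrt_eq_zero_of_nonpos (by linarith), zero_div]

lemma scaledRootCount_le_card_filter_le (γ : ℝ) (l : ℕ) (a y : ℝ) :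
    scaledRootCount γ l a y ≤ ((genHermite γ l).roots.filter fun x => x ≤ √l * y).card := by
  refine le_trans (Finset.card_le_card ?_) (Multiset.toFinset_card_le _)
  intro z hz
  simp only [Finset.mem_filter, Multiset.mem_toFinset, Multiset.mem_filter] at hz ⊢
  exact ⟨hz.1, hz.2.2.le⟩

lemma card_filter_le_add_scaledRootCount_le (γ : ℝ) (l : ℕ) (y b : ℝ) :
    ((genHermite γ l).roots.filter fun x => x ≤ √l * y).card + scaledRootCount γ l y b ≤ l := by
  have h1 : scaledRootCount γ l y b ≤
      ((genHermite γ l).roots.filter fun x => ¬ x ≤ √l * y).card := by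
    refine le_trans (Finset.card_le_card ?_) (Multiset.toFinset_card_le _)
    intro z hz
    simp only [Finset.mem_filter, Multiset.mem_toFinset, Multiset.mem_filter] at hz ⊢
    exact ⟨hz.1, hz.2.1.not_ge⟩
  have h2 := congrArg Multiset.card
    (Multiset.filter_add_not (fun x => x ≤ √l * y) (genHermite γ l).roots)
  rw [Multiset.card_add] at h2
  have h3 := card_roots' (genHermite γ l)
  rw [(genHermite_monic_natDegree γ l).2] at h3
  omega

/-- **Asymptotic zero distribution of the generalized Hermite polynomials (Theorem 4.5).**
If `γ_l > -1` and `γ_l / l → c ≥ 0`, then the number `N_l(√l · y)` of zeros of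
`K_l^{(γ_l)}` (counted with multiplicity) that are `≤ √l · y` satisfies
`N_l(√l·y)/l → (1/π) ∫_{x ≤ y, (x²-c/2-1)² < c+1} √((c+1) - (x²-c/2-1)²)/|x| dx`. -/
theorem genHermite_asymptotic_zero_distribution
    (γ : ℕ → ℝ) (hγ : ∀ l ≥ 1, -1 < γ l)
    (c : ℝ) (hc : 0 ≤ c)
    (hlim : Tendsto (fun l : ℕ => γ l / l) atTop (nhds c)) :
    ∀ y : ℝ,
      Tendsto
        (fun l : ℕ =>
          ((((genHermite (γ l) l).roots.filter
              (fun x => x ≤ Real.sqrt l * y)).card : ℝ)) / l)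
        atTop
        (nhds ((1 / Real.pi) *
          ∫ x in {x : ℝ | x ≤ y ∧ (x ^ 2 - c / 2 - 1) ^ 2 < c + 1},
            Real.sqrt ((c + 1) - (x ^ 2 - c / 2 - 1) ^ 2) / |x|)) := by
  intro y
  have hπ := Real.pi_pos
  set R := √(c / 2 + 1 + √(c + 1)) + |y| with hRdef
  have hR : √(c / 2 + 1 + √(c + 1)) ≤ R := by linarith [abs_nonneg y]
  have hyR : |y| ≤ R := by linarith [Real.sqrt_nonneg (c / 2 + 1 + √(c + 1))]
  have hy := abs_le.1 hyR
  rw [setIntegral_eq_integral_genHermiteDensity hR hy.1, one_div_mul_eq_div]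
  have htotal := pi_le_integral_genHermiteDensity hc hR
  rw [← intervalIntegral.integral_add_adjacent_intervals
    (intervalIntegrable_genHermiteDensity c (-R) y)
    (intervalIntegrable_genHermiteDensity c y R)] at htotal
  have htotal' : 1 ≤ (∫ t in (-R)..y, genHermiteDensity c t) / Real.pi +
      (∫ t in y..R, genHermiteDensity c t) / Real.pi := by
    rwa [← add_div, one_le_div hπ]
  rw [Metric.tendsto_nhds]
  intro ε hε
  filter_upwards [eventually_integral_sub_le hlim hy.1 (half_pos hε),
    eventually_integral_sub_le hlim hy.2 (half_pos hε), eventually_gt_atTop 0] with l h1 h2 hl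
  have hl' : (0 : ℝ) < l := by exact_mod_cast hl
  have h3 : (scaledRootCount (γ l) l (-R) y : ℝ) / l ≤
      (((genHermite (γ l) l).roots.filter fun x => x ≤ √l * y).card : ℝ) / l := by
    gcongr
    exact scaledRootCount_le_card_filter_le _ _ _ _
  have h4 : (((genHermite (γ l) l).roots.filter fun x => x ≤ √l * y).card : ℝ) / l +
      scaledRootCount (γ l) l y R / l ≤ 1 := by
    rw [← add_div, div_le_one hl']
    exact_mod_cast card_filter_le_add_scaledRootCount_le _ _ _ _
  rw [Real.dist_eq, abs_lt]
  constructor <;> linarith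
end
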